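/- Under Assumptions (i)–(iv) on the cell energy, the energy is bounded away from zero for large centered arguments: there exist c > 0 and R > 0 such that W_cell(G) ≥ c for every G ∈ ℝ^{d×2^d} with G ⊥ V₀ (columns summing to zero) and |G| ≥ R; in particular liminf_{|G|→∞, G⊥V₀} W_cell(G) > 0. -/

import Mathlib

open scoped BigOperators ENNReal Pointwise
open MeasureTheory Filter Set

attribute [local instance] Classical.propDecidable

noncomputable section

namespace Cleavage

/-- `ℝ^{d × 2^d}`: matrices whose columns are indexed by the corner bit-vectors of a cell. -/
abbrev CellMat (d : ℕ) := Fin d → (Fin d → Bool) → ℝ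

/-- Euclidean norm on `ℝ^n`. -/
def eunorm {n : ℕ} (v : Fin n → ℝ) : ℝ := Real.sqrt (∑ i, v i ^ 2)

/-- Frobenius (Euclidean) norm on `ℝ^{d×2^d}`. -/
def mnorm {d : ℕ} (G : CellMat d) : ℝ := Real.sqrt (∑ j, ∑ b, G j b ^ 2)

/-- corner of the reference cube `[-1/2,1/2)^d` indexed by a bit-vector. -/
def cornerVec {d : ℕ} (b : Fin d → Bool) : Fin d → ℝ := fun i => if b i then 1 / 2 else -(1 / 2)

/-- the matrix `Z` whose columns are the corners `z_i = A·(±1/2,…,±1/2)` of the reference cell. -/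
def Zmat (d : ℕ) (A : Matrix (Fin d) (Fin d) ℝ) : CellMat d := fun j b => A.mulVec (cornerVec b) j

/-- `R ∈ SO(d)`. -/
def IsSO {d : ℕ} (R : Matrix (Fin d) (Fin d) ℝ) : Prop := R.transpose * R = 1 ∧ R.det = 1

/-- the product `R G` of a `d×d` matrix with an element of `ℝ^{d×2^d}`. -/
def rotCell {d : ℕ} (R : Matrix (Fin d) (Fin d) ℝ) (G : CellMat d) : CellMat d :=
  fun j b => ∑ i, R j i * G i b

/-- `F · Z`. -/
def matZ (d : ℕ) (A F : Matrix (Fin d) (Fin d) ℝ) : CellMat d := rotCell F (Zmat d A)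

/-- the translation `(c,…,c)`. -/
def transCell {d : ℕ} (c : Fin d → ℝ) : CellMat d := fun j _ => c j

/-- `SO̅(d) = { R Z : R ∈ SO(d) }`. -/
def SObar (d : ℕ) (A : Matrix (Fin d) (Fin d) ℝ) : Set (CellMat d) :=
  {G | ∃ R : Matrix (Fin d) (Fin d) ℝ, IsSO R ∧ G = rotCell R (Zmat d A)}

/-- Euclidean distance of `G` to `SO̅(d)`. -/
def distSObar (d : ℕ) (A : Matrix (Fin d) (Fin d) ℝ) (G : CellMat d) : ℝ :=
  sInf {t | ∃ H ∈ SObar d A, t = mnorm (G - H)}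

/-- `G ⊥ V₀`, i.e. the columns of `G` sum to zero. -/
def PerpTrans {d : ℕ} (G : CellMat d) : Prop := ∀ j, ∑ b, G j b = 0

/-- Frobenius inner product. -/
def frobInner {d : ℕ} (G H : CellMat d) : ℝ := ∑ j, ∑ b, G j b * H j b

/-- the quadratic form `Q_cell(G) = D²W_cell(Z)[G,G]`. -/
def Qcell (d : ℕ) (A : Matrix (Fin d) (Fin d) ℝ) (W : CellMat d → ℝ) (G : CellMat d) : ℝ :=
  iteratedFDeriv ℝ 2 W (Zmat d A) ![G, G]

/-- Assumption (i): frame indifference. -/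
def FrameIndiff (d : ℕ) (W : CellMat d → ℝ) : Prop :=
  ∀ (G : CellMat d) (R : Matrix (Fin d) (Fin d) ℝ) (c : Fin d → ℝ),
    IsSO R → W (rotCell R G + transCell c) = W G

/-- Assumption (ii): the zero set of the energy. -/
def MinimalOnSO (d : ℕ) (A : Matrix (Fin d) (Fin d) ℝ) (W : CellMat d → ℝ) : Prop :=
  ∀ G : CellMat d, W G = 0 ↔ ∃ R : Matrix (Fin d) (Fin d) ℝ, IsSO R ∧
    ∃ c : Fin d → ℝ, G = rotCell R (Zmat d A) + transCell c

/-- Assumption (iii), smoothness part: `W` continuous and `C²` near `SO̅(d)`. -/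
def SmoothNearSO (d : ℕ) (A : Matrix (Fin d) (Fin d) ℝ) (W : CellMat d → ℝ) : Prop :=
  Continuous W ∧ ∃ U : Set (CellMat d), IsOpen U ∧ SObar d A ⊆ U ∧ ContDiffOn ℝ 2 W U

/-- Assumption (iii), positivity part: `Q_cell` positive definite orthogonally to
translations and infinitesimal rotations. -/
def HessPosDef (d : ℕ) (A : Matrix (Fin d) (Fin d) ℝ) (W : CellMat d → ℝ) : Prop :=
  ∀ G : CellMat d, G ≠ 0 → (∀ c : Fin d → ℝ, frobInner G (transCell c) = 0) →
    (∀ H : Matrix (Fin d) (Fin d) ℝ, H.transpose = -H → frobInner G (rotCell H (Zmat d A)) = 0) →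
    0 < Qcell d A W G

/-- a partition `𝒵 = 𝒵₁ ∪̇ … ∪̇ 𝒵ₙ` of the corners. -/
def IsCellPartition {d n : ℕ} (P : Fin n → Finset (Fin d → Bool)) : Prop :=
  (∀ i, (P i).Nonempty) ∧ (∀ i j, i ≠ j → Disjoint (P i) (P j)) ∧
    Finset.univ.biUnion P = Finset.univ

/-- `(1/2) Σ_{i≠j} Σ_{z_s ∈ 𝒵ᵢ} Σ_{z_t ∈ 𝒵ⱼ} β(z_s,z_t)`. -/
def crossSum {d n : ℕ} (β : (Fin d → Bool) → (Fin d → Bool) → ℝ)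
    (P : Fin n → Finset (Fin d → Bool)) : ℝ :=
  (1 / 2) * ∑ i, ∑ j, if i = j then 0 else ∑ s ∈ P i, ∑ t ∈ P j, β s t

/-- `M ≤ d(G;𝒵ᵢ,𝒵ⱼ)` for all `i ≠ j`. -/
def Separated {d n : ℕ} (M : ℝ) (P : Fin n → Finset (Fin d → Bool)) (G : CellMat d) : Prop :=
  ∀ i j, i ≠ j → ∀ s ∈ P i, ∀ t ∈ P j, M ≤ eunorm (fun jj => G jj s - G jj t)

/-- `G[𝒵ᵢ]`. -/
def restrictCols {d n : ℕ} (P : Fin n → Finset (Fin d → Bool)) (G : CellMat d) (i : Fin n) :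
    {b // b ∈ P i} → Fin d → ℝ := fun b jj => G jj b.1

/-- Assumption (iv): decomposition into pair interactions at large separation,
with the compatibility condition near `SO̅(d)`. -/
def PairDecomposition (d : ℕ) (A : Matrix (Fin d) (Fin d) ℝ) (W : CellMat d → ℝ)
    (β : (Fin d → Bool) → (Fin d → Bool) → ℝ) : Prop :=
  ∀ (n : ℕ), 2 ≤ n → ∀ P : Fin n → Finset (Fin d → Bool), IsCellPartition P →
    ∃ Wc : (i : Fin n) → ({b // b ∈ P i} → Fin d → ℝ) → ℝ,
      (∀ i v, 0 ≤ Wc i v) ∧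
      (∀ δ : ℝ, 0 < δ → ∃ M : ℝ, ∀ G : CellMat d, Separated M P G →
        |W G - ((∑ i, Wc i (restrictCols P G i)) + crossSum β P)| ≤ δ) ∧
      (∃ C, 0 < C ∧ ∃ U : Set (CellMat d), IsOpen U ∧ SObar d A ⊆ U ∧
        ∀ H ∈ U, ∀ i, Wc i (restrictCols P H i) ≤ C * W H)

/-- the triple sum of assumption (iv) is strictly positive unless `n = 1`. -/
def CrossPos (d : ℕ) (β : (Fin d → Bool) → (Fin d → Bool) → ℝ) : Prop :=
  ∀ (n : ℕ), 2 ≤ n → ∀ P : Fin n → Finset (Fin d → Bool), IsCellPartition P → 0 < crossSum β P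

def dotp {n : ℕ} (v w : Fin n → ℝ) : ℝ := ∑ i, v i * w i

/-- the set of interaction directions `𝒱 = A{-1,0,1}^d \ {0}`. -/
def Vfin (d : ℕ) (A : Matrix (Fin d) (Fin d) ℝ) : Finset (Fin d → ℝ) :=
  ((Finset.univ : Finset (Fin d → Fin 3)).image fun t =>
    A.mulVec fun i => ((t i : ℕ) : ℝ) - 1).erase 0

/-- `(1/2) β(z_s,z_t) = 2^{k-d} β(ν)` whenever `z_s - z_t = ν`, `ν` having `k` non-zero entries. -/
def BetaNuCompat (d : ℕ) (A : Matrix (Fin d) (Fin d) ℝ)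
    (β : (Fin d → Bool) → (Fin d → Bool) → ℝ) (βν : (Fin d → ℝ) → ℝ) : Prop :=
  ∀ s t : Fin d → Bool, s ≠ t →
    (1 / 2) * β s t =
      (2 : ℝ) ^ ((((Finset.univ.filter fun i => s i ≠ t i)).card : ℤ) - (d : ℤ)) *
        βν (A.mulVec fun i => cornerVec s i - cornerVec t i)

/-- `β_A = min_{ξ ≠ 0} Σ_ν β(ν)|ν·ξ| / |e₁·ξ|`. -/
def betaA (d : ℕ) [NeZero d] (A : Matrix (Fin d) (Fin d) ℝ) (βν : (Fin d → ℝ) → ℝ) : ℝ :=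
  sInf {q | ∃ ξ : Fin d → ℝ, ξ ≠ 0 ∧ ξ 0 ≠ 0 ∧
    q = (∑ ν ∈ Vfin d A, βν ν * |dotp ν ξ|) / |ξ 0|}

/-- `α_A`, characterized as the minimal value `Q̃(1)` of the reduced minimization problem. -/
def alphaA (d : ℕ) [NeZero d] (A : Matrix (Fin d) (Fin d) ℝ) (W : CellMat d → ℝ) : ℝ :=
  sInf {q | ∃ G : Matrix (Fin d) (Fin d) ℝ, G 0 0 = 1 ∧
    q = Qcell d A W (matZ d A ((1 / 2 : ℝ) • (G + G.transpose)))}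

def M1 (d : ℕ) (A : Matrix (Fin d) (Fin d) ℝ) (βν : (Fin d → ℝ) → ℝ) : ℝ :=
  sInf {m | ∃ ξ : Fin d → ℝ, eunorm ξ = 1 ∧ m = ∑ ν ∈ Vfin d A, βν ν * |dotp ν ξ|}

def M2 (d : ℕ) (A : Matrix (Fin d) (Fin d) ℝ) (βν : (Fin d → ℝ) → ℝ) : ℝ :=
  sSup {m | ∃ ξ : Fin d → ℝ, eunorm ξ = 1 ∧ m = ∑ ν ∈ Vfin d A, βν ν * |dotp ν ξ|}

/-! lattice geometry: the (translated) lattice `ε(ρ + A(k + u))`. -/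

def latPt (d : ℕ) (A : Matrix (Fin d) (Fin d) ℝ) (ε : ℝ) (rv : Fin d → ℝ) (k : Fin d → ℤ)
    (u : Fin d → ℝ) : Fin d → ℝ :=
  ε • A.mulVec fun i => rv i + (k i : ℝ) + u i

def cellCorner (d : ℕ) (A : Matrix (Fin d) (Fin d) ℝ) (ε : ℝ) (rv : Fin d → ℝ) (k : Fin d → ℤ)
    (b : Fin d → Bool) : Fin d → ℝ :=
  latPt d A ε rv k fun i => if b i then 1 else 0

/-- the discrete gradient `∇̄y = ε⁻¹(y₁ - ȳ, …, y_{2^d} - ȳ)` on the cell with index `k`. -/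
def dgrad (d : ℕ) (A : Matrix (Fin d) (Fin d) ℝ) (ε : ℝ) (rv : Fin d → ℝ)
    (y : (Fin d → ℝ) → Fin d → ℝ) (k : Fin d → ℤ) : CellMat d :=
  fun j b =>
    (y (cellCorner d A ε rv k b) j -
      (∑ b' : Fin d → Bool, y (cellCorner d A ε rv k b') j) / 2 ^ d) / ε

/-- the piecewise affine interpolation on the reference cube `[0,1]^n`, obtained inductively
over face dimension through the barycenters of the faces.  On each simplex of the associated
barycentric decomposition it is the affine interpolation of the corner/barycenter values; it is
computed here radially from the barycenter. -/
def cubeInterp : (n : ℕ) → ((Fin n → Bool) → ℝ) → (Fin n → ℝ) → ℝ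
  | 0, f, _ => f fun i => i.elim0
  | n + 1, f, x =>
    let c : ℝ := (∑ b : Fin (n + 1) → Bool, f b) / 2 ^ (n + 1)
    have h : ∃ i : Fin (n + 1), ∀ j : Fin (n + 1), |x j - 1 / 2| ≤ |x i - 1 / 2| :=
      Finite.exists_max fun i => |x i - 1 / 2|
    let i0 := Classical.choose h
    let t := 2 * |x i0 - 1 / 2|
    if t = 0 then c
    else
      (1 - t) * c +
        t * cubeInterp n (fun bb => f (i0.insertNth (if (1 : ℝ) / 2 < x i0 then true else false) bb))
          (fun j => 1 / 2 + (x (i0.succAbove j) - 1 / 2) / t)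

/-- the index of the lattice cell containing `x`. -/
def cellIndex (d : ℕ) (A : Matrix (Fin d) (Fin d) ℝ) (ε : ℝ) (rv : Fin d → ℝ)
    (x : Fin d → ℝ) : Fin d → ℤ :=
  fun i => ⌊(ε • A)⁻¹.mulVec x i - rv i⌋

/-- the reference coordinate (in `[0,1)^d`) of `x` inside its cell. -/
def refCoord (d : ℕ) (A : Matrix (Fin d) (Fin d) ℝ) (ε : ℝ) (rv : Fin d → ℝ)
    (x : Fin d → ℝ) : Fin d → ℝ :=
  fun i => (ε • A)⁻¹.mulVec x i - rv i - (cellIndex d A ε rv x i : ℝ)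

/-- a cell is intact if `diam{∇̄y, 𝒵} ≤ C_int`. -/
def IntactCell (d : ℕ) (A : Matrix (Fin d) (Fin d) ℝ) (ε : ℝ) (rv : Fin d → ℝ) (Cint : ℝ)
    (y : (Fin d → ℝ) → Fin d → ℝ) (k : Fin d → ℤ) : Prop :=
  ∀ b b' : Fin d → Bool,
    eunorm (fun jj => y (cellCorner d A ε rv k b) jj - y (cellCorner d A ε rv k b') jj) ≤ Cint * ε

/-- the interpolation `ỹ`: the simplicial interpolation on intact cells; on broken cells,
componentwise the simplicial interpolation where `diam_i ≤ C_int` and the affine fallback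
`ỹ^i(x) = y^i(z₁) + (x - z₁)_i` otherwise. -/
def tildey (d : ℕ) (A : Matrix (Fin d) (Fin d) ℝ) (ε : ℝ) (rv : Fin d → ℝ) (Cint : ℝ)
    (y : (Fin d → ℝ) → Fin d → ℝ) (x : Fin d → ℝ) : Fin d → ℝ := fun j =>
  let k := cellIndex d A ε rv x
  if IntactCell d A ε rv Cint y k then
    cubeInterp d (fun b => y (cellCorner d A ε rv k b) j) (refCoord d A ε rv x)
  else if ∀ b b' : Fin d → Bool,
      |y (cellCorner d A ε rv k b) j - y (cellCorner d A ε rv k b') j| ≤ Cint * ε then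
    cubeInterp d (fun b => y (cellCorner d A ε rv k b) j) (refCoord d A ε rv x)
  else
    y (cellCorner d A ε rv k fun _ => false) j + (x j - cellCorner d A ε rv k (fun _ => false) j)

/-- the mesoscopic exponent `s = (3d-1)/(3d)`. -/
def sExp (d : ℕ) : ℝ := (3 * d - 1) / (3 * d)


/-! the mesoscopic cell `U_ε = (0,ℓ) × (0,w)^{d-1}` and its energies. -/

def Ubox (d : ℕ) [NeZero d] (ℓ w : ℝ) : Set (Fin d → ℝ) :=
  {x | x 0 ∈ Ioo 0 ℓ ∧ ∀ i : Fin d, i ≠ 0 → x i ∈ Ioo 0 w}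

/-- inner cells: the closure of the cell is contained in `U_ε`. -/
def InnerCellM (d : ℕ) [NeZero d] (A : Matrix (Fin d) (Fin d) ℝ) (ε : ℝ) (rv : Fin d → ℝ)
    (ℓ w : ℝ) (k : Fin d → ℤ) : Prop :=
  ∀ u : Fin d → ℝ, (∀ i, u i ∈ Icc (0 : ℝ) 1) → latPt d A ε rv k u ∈ Ubox d ℓ w

def tailCoords (d : ℕ) (x : Fin d → ℝ) : Fin (d - 1) → ℝ := fun i => x ⟨i.1 + 1, by omega⟩

def consd (d : ℕ) [NeZero d] (a : ℝ) (x' : Fin (d - 1) → ℝ) : Fin d → ℝ :=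
  fun j => if h : (j : ℕ) = 0 then a else x' ⟨(j : ℕ) - 1, by omega⟩

/-- the boundary faces `{0,ℓ} × w·Ws`. -/
def FaceSet (d : ℕ) [NeZero d] (ℓ w : ℝ) (Ws : Set (Fin (d - 1) → ℝ)) : Set (Fin d → ℝ) :=
  {x | (x 0 = 0 ∨ x 0 = ℓ) ∧ tailCoords d x ∈ w • Ws}

/-- cells whose closure meets the boundary faces `{0,ℓ} × w·Ws`. -/
def BoundaryCellM (d : ℕ) [NeZero d] (A : Matrix (Fin d) (Fin d) ℝ) (ε : ℝ) (rv : Fin d → ℝ)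
    (ℓ w : ℝ) (Ws : Set (Fin (d - 1) → ℝ)) (k : Fin d → ℤ) : Prop :=
  ∃ u : Fin d → ℝ, (∀ i, u i ∈ Icc (0 : ℝ) 1) ∧ latPt d A ε rv k u ∈ FaceSet d ℓ w Ws

/-- `E(U_ε, y)`: sum of the cell energies over the inner cells plus one half of the sum over
the boundary cells. -/
def EnergyMeso (d : ℕ) [NeZero d] (A : Matrix (Fin d) (Fin d) ℝ) (Wcell : CellMat d → ℝ)
    (ε : ℝ) (rv : Fin d → ℝ) (ℓ w : ℝ) (Ws : Set (Fin (d - 1) → ℝ))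
    (y : (Fin d → ℝ) → Fin d → ℝ) : ℝ :=
  ε ^ (d - 1) *
    ((∑' k : Fin d → ℤ, if InnerCellM d A ε rv ℓ w k then Wcell (dgrad d A ε rv y k) else 0) +
      (1 / 2) * ∑' k : Fin d → ℤ,
        if BoundaryCellM d A ε rv ℓ w Ws k then Wcell (dgrad d A ε rv y k) else 0)

/-- a cell is `1`-broken if `diam₁{∇̄y, 𝒵} > C*_int`. -/
def OneBroken (d : ℕ) [NeZero d] (A : Matrix (Fin d) (Fin d) ℝ) (ε : ℝ) (rv : Fin d → ℝ)
    (Cstar : ℝ) (y : (Fin d → ℝ) → Fin d → ℝ) (k : Fin d → ℤ) : Prop :=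
  ∃ b b' : Fin d → Bool,
    Cstar * ε < |y (cellCorner d A ε rv k b) 0 - y (cellCorner d A ε rv k b') 0|

/-- the (half open) cell with index `k`. -/
def cellRegion (d : ℕ) (A : Matrix (Fin d) (Fin d) ℝ) (ε : ℝ) (rv : Fin d → ℝ)
    (k : Fin d → ℤ) : Set (Fin d → ℝ) :=
  {x | ∃ u : Fin d → ℝ, (∀ i, u i ∈ Ico (0 : ℝ) 1) ∧ x = latPt d A ε rv k u}

/-- the averaged boundary condition
`(1/(w^{d-1}|W|)) ∫_{w·W} (ỹ¹(ℓ,x') - ỹ¹(0,x')) dx' = ℓ(1+r)`. -/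
def AvgBC (d : ℕ) [NeZero d] (A : Matrix (Fin d) (Fin d) ℝ) (ε : ℝ) (rv : Fin d → ℝ)
    (Cstar ℓ w : ℝ) (Ws : Set (Fin (d - 1) → ℝ)) (y : (Fin d → ℝ) → Fin d → ℝ) (r : ℝ) : Prop :=
  (∫ x' in w • Ws,
      (tildey d A ε rv Cstar y (consd d ℓ x') 0 - tildey d A ε rv Cstar y (consd d 0 x') 0)) =
    w ^ (d - 1) * (volume Ws).toReal * (ℓ * (1 + r))

/-- no `1`-broken cell meets the boundary faces `{0,ℓ} × w·W̃`. -/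
def NoBrokenFace (d : ℕ) [NeZero d] (A : Matrix (Fin d) (Fin d) ℝ) (ε : ℝ) (rv : Fin d → ℝ)
    (Cstar ℓ w : ℝ) (Wts : Set (Fin (d - 1) → ℝ)) (y : (Fin d → ℝ) → Fin d → ℝ) : Prop :=
  ∀ k : Fin d → ℤ, OneBroken d A ε rv Cstar y k →
    cellRegion d A ε rv k ∩ FaceSet d ℓ w Wts = ∅

/-- the mesoscopic minimization problem `M(U_ε, r)`. -/
def Mmeso (d : ℕ) [NeZero d] (A : Matrix (Fin d) (Fin d) ℝ) (Wcell : CellMat d → ℝ)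
    (ε : ℝ) (rv : Fin d → ℝ) (Cstar ℓ w : ℝ) (Wts Ws : Set (Fin (d - 1) → ℝ)) (r : ℝ) : ℝ :=
  sInf {e | ∃ y : (Fin d → ℝ) → Fin d → ℝ,
    AvgBC d A ε rv Cstar ℓ w Ws y r ∧ NoBrokenFace d A ε rv Cstar ℓ w Wts y ∧
    e = EnergyMeso d A Wcell ε rv ℓ w Ws y}

def einfDist {n : ℕ} (x : Fin n → ℝ) (S : Set (Fin n → ℝ)) : ℝ :=
  sInf {t | ∃ z ∈ S, t = eunorm fun i => x i - z i}

/-- the condition (W form): a connected subset of `(0,1)^{d-1}` of measure in `(1/2, 1]` whose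
boundary has `H^{d-2}`-measure `< D`. -/
def WFormP (d : ℕ) (D : ℝ) (S : Set (Fin (d - 1) → ℝ)) : Prop :=
  (∀ x ∈ S, ∀ i, x i ∈ Ioo (0 : ℝ) 1) ∧ IsConnected S ∧
    1 / 2 < (volume S).toReal ∧ (volume S).toReal ≤ 1 ∧
    μH[(d : ℝ) - 2] (frontier S) < ENNReal.ofReal D

/-- the subset of `W̃` of points of distance `> D'ε^{1-s}` from `∂W̃`. -/
def coreSet (d : ℕ) (D' ε : ℝ) (Wts : Set (Fin (d - 1) → ℝ)) : Set (Fin (d - 1) → ℝ) :=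
  {x ∈ Wts | D' * ε ^ (1 - sExp d) < einfDist x (frontier Wts)}

/-- `W` is the connected component of largest Lebesgue measure of `coreSet`. -/
def LargestComp (d : ℕ) (D' ε : ℝ) (Wts Ws : Set (Fin (d - 1) → ℝ)) : Prop :=
  ∃ x₀ ∈ coreSet d D' ε Wts, Ws = connectedComponentIn (coreSet d D' ε Wts) x₀ ∧
    ∀ x ∈ coreSet d D' ε Wts, volume (connectedComponentIn (coreSet d D' ε Wts) x) ≤ volume Ws

/-- the admissible pairs `(W̃, W)`. -/
def AdmissiblePair (d : ℕ) (D D' ε : ℝ) (Wts Ws : Set (Fin (d - 1) → ℝ)) : Prop :=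
  WFormP d D Wts ∧ LargestComp d D' ε Wts Ws ∧ WFormP d D Ws

/-! the macroscopic body `Ω = (0,l₁) × … × (0,l_d)`. -/

def OmegaBox (d : ℕ) (l : Fin d → ℝ) : Set (Fin d → ℝ) := {x | ∀ i, x i ∈ Ioo 0 (l i)}

def InnerCellOmega (d : ℕ) (A : Matrix (Fin d) (Fin d) ℝ) (ε : ℝ) (l : Fin d → ℝ)
    (k : Fin d → ℤ) : Prop :=
  ∀ u : Fin d → ℝ, (∀ i, u i ∈ Icc (0 : ℝ) 1) → latPt d A ε 0 k u ∈ OmegaBox d l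

/-- the rescaled energy `𝓔_ε(y) = ε^{d-1} Σ_{inner cells} W_cell(∇̄y)`. -/
def EnergyOmega (d : ℕ) (A : Matrix (Fin d) (Fin d) ℝ) (Wcell : CellMat d → ℝ) (ε : ℝ)
    (l : Fin d → ℝ) (y : (Fin d → ℝ) → Fin d → ℝ) : ℝ :=
  ε ^ (d - 1) * ∑' k : Fin d → ℤ,
    if InnerCellOmega d A ε l k then Wcell (dgrad d A ε 0 y k) else 0

/-- `l_A = Σ_j |v_j · e₁|`. -/
def lA (d : ℕ) [NeZero d] (A : Matrix (Fin d) (Fin d) ℝ) : ℝ := ∑ j, |A 0 j|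

/-- the boundary condition of the class `𝒜(a_ε)`:
`y¹(x) = (1+a)x₁` for lattice points `x ∈ Ω` with `x₁ ≤ 2l_Aε` or `x₁ ≥ l₁ - 2l_Aε`. -/
def BdryCondA (d : ℕ) [NeZero d] (A : Matrix (Fin d) (Fin d) ℝ) (ε : ℝ) (l : Fin d → ℝ)
    (a : ℝ) (y : (Fin d → ℝ) → Fin d → ℝ) : Prop :=
  ∀ k : Fin d → ℤ, latPt d A ε 0 k 0 ∈ OmegaBox d l →
    ((latPt d A ε 0 k 0) 0 ≤ 2 * lA d A * ε ∨ l 0 - 2 * lA d A * ε ≤ (latPt d A ε 0 k 0) 0) →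
    y (latPt d A ε 0 k 0) 0 = (1 + a) * (latPt d A ε 0 k 0) 0

/-- `inf {𝓔_ε(y) : y ∈ 𝒜(a_ε)}`. -/
def minEnergy (d : ℕ) [NeZero d] (A : Matrix (Fin d) (Fin d) ℝ) (Wcell : CellMat d → ℝ)
    (ε : ℝ) (l : Fin d → ℝ) (a : ℝ) : ℝ :=
  sInf {e | ∃ y : (Fin d → ℝ) → Fin d → ℝ,
    BdryCondA d A ε l a y ∧ e = EnergyOmega d A Wcell ε l y}

/-! helpers for the interpolation lemmas. -/

/-- the simplicial interpolation on the single cell with index `k`. -/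
def cellInterp (d : ℕ) (A : Matrix (Fin d) (Fin d) ℝ) (ε : ℝ) (rv : Fin d → ℝ)
    (y : (Fin d → ℝ) → Fin d → ℝ) (k : Fin d → ℤ) (x : Fin d → ℝ) : Fin d → ℝ :=
  fun j => cubeInterp d (fun b => y (cellCorner d A ε rv k b) j)
    (fun i => (ε • A)⁻¹.mulVec x i - rv i - (k i : ℝ))

/-- the gradient of a map `ℝ^d → ℝ^d` as a `d×d` array. -/
def gradM (d : ℕ) (f : (Fin d → ℝ) → Fin d → ℝ) (x : Fin d → ℝ) : Fin d → Fin d → ℝ :=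
  fun j i => fderiv ℝ f x (Pi.single i 1) j

def sqnorm (d : ℕ) (F : Fin d → Fin d → ℝ) : ℝ := Real.sqrt (∑ j, ∑ i, F j i ^ 2)

/-- Euclidean distance of a `d×d` matrix to `SO(d)`. -/
def distSO (d : ℕ) (F : Fin d → Fin d → ℝ) : ℝ :=
  sInf {t | ∃ R : Matrix (Fin d) (Fin d) ℝ, IsSO R ∧ t = sqnorm d fun j i => F j i - R j i}

/-- `∇̄y` as a (piecewise constant) function on `ℝ^d`. -/
def dgradFun (d : ℕ) (A : Matrix (Fin d) (Fin d) ℝ) (ε : ℝ) (rv : Fin d → ℝ)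
    (y : (Fin d → ℝ) → Fin d → ℝ) (x : Fin d → ℝ) : CellMat d :=
  dgrad d A ε rv y (cellIndex d A ε rv x)

/-- the directional interpolation `ȳ_ν` on the cells `ε D^ν(λ + [0,1)^d)`. -/
def barInterp (d : ℕ) [NeZero d] (ε Cint : ℝ) (Dν : Matrix (Fin d) (Fin d) ℝ) (ν : Fin d → ℝ)
    (y : (Fin d → ℝ) → Fin d → ℝ) (x : Fin d → ℝ) : Fin d → ℝ :=
  let u := (ε • Dν)⁻¹.mulVec x
  let x0 := ε • Dν.mulVec fun i => (⌊u i⌋ : ℝ)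
  let x1 := fun i => x0 i + ε * ν i
  if eunorm (fun j => y x1 j - y x0 j) ≤ Cint * ε then
    fun j => (1 - (u 0 - (⌊u 0⌋ : ℝ))) * y x0 j + (u 0 - (⌊u 0⌋ : ℝ)) * y x1 j
  else y x0

end Cleavage

namespace Cleavage

/-!
A centered `G` with large norm has a row whose entries are spread over a wide range. There are only
`2 ^ d` entries, so by the pigeonhole principle they leave a wide gap, and the corners on its two
sides form a partition of `𝒵` into two far-apart blocks. Assumption (iv) then bounds the energy from
below by almost the cross sum of that partition, and the finitely many partitions into two blocks
have a positive smallest cross sum.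
-/

section OrderedGroup

variable {α K : Type*} [Fintype α] [AddCommGroup K] [LinearOrder K] [IsOrderedAddMonoid K]

theorem exists_le_card_forall_notMem_Ico (f : α → K) (c M : K) :
    ∃ k ≤ Fintype.card α, ∀ x, f x ∉ Ico (c + k • M) (c + (k + 1) • M) := by
  by_contra! hcover
  choose x hx using fun k : Fin (Fintype.card α + 1) ↦ hcover k (Nat.lt_succ_iff.mp k.isLt)
  obtain ⟨k, l, hkl, hxkl⟩ := Fintype.exists_ne_map_eq_of_card_lt x (by simp)
  have hdisjoint : Disjoint (Ico (c + (k : ℕ) • M) (c + ((k : ℕ) + 1) • M))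
      (Ico (c + (l : ℕ) • M) (c + ((l : ℕ) + 1) • M)) := by
    have h := pairwise_disjoint_Ico_add_zsmul c M
      (Nat.cast_injective.ne (Fin.val_injective.ne hkl))
    simpa only [Function.onFun, ← Nat.cast_succ, natCast_zsmul] using h
  exact Set.disjoint_left.mp hdisjoint (hx k) (hxkl ▸ hx l)

theorem exists_finset_forall_add_le_of_add_card_nsmul_le (f : α → K) {M : K} (hM : 0 < M)
    {a b : α} (hab : f a + (Fintype.card α + 1) • M ≤ f b) :
    ∃ S : Finset α, a ∈ S ∧ b ∉ S ∧ ∀ s ∈ S, ∀ t ∉ S, f s + M ≤ f t := by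
  obtain ⟨k, hk, hempty⟩ := exists_le_card_forall_notMem_Ico f (f a) M
  have hk_ne : k ≠ 0 := by
    rintro rfl
    exact hempty a (by simp [hM])
  refine ⟨Finset.univ.filter (f · < f a + k • M), ?_, ?_, fun s hs t ht ↦ ?_⟩
  · simpa using nsmul_pos hM hk_ne
  · have hkb : f a + k • M ≤ f b :=
      (add_le_add_right (nsmul_le_nsmul_left hM.le (hk.trans (Nat.le_succ _))) _).trans hab
    simpa using hkb
  · simp only [Finset.mem_filter_univ, not_lt] at hs ht
    calc f s + M ≤ f a + k • M + M := by gcongr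
      _ = f a + (k + 1) • M := by rw [succ_nsmul, add_assoc]
      _ ≤ f t := not_lt.mp fun hlt ↦ hempty t ⟨ht, hlt⟩

theorem exists_abs_le_sub_of_sum_eq_zero {f : α → K} (hf : ∑ x, f x = 0) (x : α) :
    ∃ a b, |f x| ≤ f b - f a := by
  have hne : (Finset.univ : Finset α).Nonempty := ⟨x, Finset.mem_univ x⟩
  rcases abs_cases (f x) with ⟨habs, -⟩ | ⟨habs, -⟩
  · obtain ⟨a, -, ha⟩ := Finset.exists_le_of_sum_le (f := f) (g := 0) hne (by simp [hf])
    exact ⟨a, x, by simpa [habs] using ha⟩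
  · obtain ⟨b, -, hb⟩ := Finset.exists_le_of_sum_le (f := 0) (g := f) hne (by simp [hf])
    exact ⟨x, b, by simpa [habs] using hb⟩

end OrderedGroup

theorem abs_apply_le_eunorm {n : ℕ} (v : Fin n → ℝ) (i : Fin n) : |v i| ≤ eunorm v :=
  Real.abs_le_sqrt <|
    Finset.single_le_sum (f := fun i ↦ v i ^ 2) (fun i _ ↦ sq_nonneg (v i)) (Finset.mem_univ i)

theorem eunorm_sub_comm {n : ℕ} (v w : Fin n → ℝ) :
    eunorm (fun i ↦ v i - w i) = eunorm (fun i ↦ w i - v i) := by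
  simp only [eunorm, sub_sq_comm]

theorem mnorm_le_sqrt_mul {d : ℕ} {G : CellMat d} {K : ℝ} (hK : 0 ≤ K)
    (hG : ∀ j b, |G j b| ≤ K) : mnorm G ≤ √(d * 2 ^ d) * K :=
  calc mnorm G ≤ √(∑ _j : Fin d, ∑ _b : Fin d → Bool, K ^ 2) := by
        refine Real.sqrt_le_sqrt (Finset.sum_le_sum fun j _ ↦ Finset.sum_le_sum fun b _ ↦ ?_)
        exact sq_le_sq' (abs_le.mp (hG j b)).1 (abs_le.mp (hG j b)).2
    _ = √(d * 2 ^ d * K ^ 2) := by simp [mul_assoc]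
    _ = √(d * 2 ^ d) * K := by rw [Real.sqrt_mul (by positivity), Real.sqrt_sq hK]

theorem isCellPartition_pair_compl {d : ℕ} {S : Finset (Fin d → Bool)} (hS : S.Nonempty)
    (hSc : Sᶜ.Nonempty) : IsCellPartition ![S, Sᶜ] := by
  refine ⟨by simp [Fin.forall_fin_two, hS, hSc], ?_, ?_⟩
  · simp [Fin.forall_fin_two, disjoint_compl_right, disjoint_compl_left]
  · ext x
    simp [Fin.exists_fin_two, em]

theorem separated_pair_compl_iff {d : ℕ} {M : ℝ} {S : Finset (Fin d → Bool)} {G : CellMat d} :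
    Separated M ![S, Sᶜ] G ↔ ∀ s ∈ S, ∀ t ∉ S, M ≤ eunorm (fun j ↦ G j s - G j t) := by
  simp only [Separated, Fin.forall_fin_two, Matrix.cons_val_zero, Matrix.cons_val_one,
    Finset.mem_compl]
  constructor
  · intro h
    exact h.1.2 zero_ne_one
  · intro h
    refine ⟨⟨fun h₀ ↦ absurd rfl h₀, fun _ ↦ h⟩, fun _ t ht s hs ↦ ?_, fun h₁ ↦ absurd rfl h₁⟩
    exact eunorm_sub_comm (G · s) (G · t) ▸ h s hs t ht

theorem PerpTrans.exists_separated_pair_compl {d : ℕ} {G : CellMat d} (hG : PerpTrans G) {M : ℝ}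
    (hM : 0 < M) (hlarge : √(d * 2 ^ d) * ((2 ^ d + 1) * M) < mnorm G) :
    ∃ S : Finset (Fin d → Bool), S.Nonempty ∧ Sᶜ.Nonempty ∧ Separated M ![S, Sᶜ] G := by
  obtain ⟨j, b, hjb⟩ : ∃ j b, (2 ^ d + 1) * M < |G j b| := by
    by_contra! hsmall
    exact hlarge.not_ge (mnorm_le_sqrt_mul (by positivity) hsmall)
  obtain ⟨p, q, hpq⟩ := exists_abs_le_sub_of_sum_eq_zero (hG j) b
  have hrange : G j p + (Fintype.card (Fin d → Bool) + 1) • M ≤ G j q := by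
    simp only [Fintype.card_pi, Fintype.card_bool, Finset.prod_const, Finset.card_univ,
      Fintype.card_fin, nsmul_eq_mul]
    push_cast
    linarith
  obtain ⟨S, hpS, hqS, hgap⟩ := exists_finset_forall_add_le_of_add_card_nsmul_le (G j) hM hrange
  refine ⟨S, ⟨p, hpS⟩, ⟨q, Finset.mem_compl.mpr hqS⟩,
    separated_pair_compl_iff.mpr fun s hs t ht ↦ ?_⟩
  calc M ≤ G j t - G j s := le_sub_iff_add_le'.mpr (hgap s hs t ht)
    _ ≤ |G j s - G j t| := abs_sub_comm (G j s) (G j t) ▸ le_abs_self _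
    _ ≤ eunorm (fun i ↦ G i s - G i t) := abs_apply_le_eunorm (fun i ↦ G i s - G i t) j

section Energy

open scoped Topology

variable {d : ℕ} {A : Matrix (Fin d) (Fin d) ℝ} {W : CellMat d → ℝ}
  {β : (Fin d → Bool) → (Fin d → Bool) → ℝ}

theorem PairDecomposition.eventually_le_of_lt_crossSum (hDecomp : PairDecomposition d A W β)
    {n : ℕ} (hn : 2 ≤ n) {P : Fin n → Finset (Fin d → Bool)} (hP : IsCellPartition P) {c : ℝ}
    (hc : c < crossSum β P) : ∀ᶠ M in atTop, ∀ G, Separated M P G → c ≤ W G := by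
  obtain ⟨Wc, hWc, hlim, -⟩ := hDecomp n hn P hP
  obtain ⟨M₀, hM₀⟩ := hlim (crossSum β P - c) (sub_pos.mpr hc)
  filter_upwards [eventually_ge_atTop M₀] with M hM G hG
  have hnear := hM₀ G fun i j hij s hs t ht ↦ hM.trans (hG i j hij s hs t ht)
  have hblocks : 0 ≤ ∑ i, Wc i (restrictCols P G i) := Finset.sum_nonneg fun i _ ↦ hWc i _
  linarith [neg_le_of_abs_le hnear]

theorem PairDecomposition.exists_pos_forall_separated_pair_compl_le
    (hDecomp : PairDecomposition d A W β) (hCross : CrossPos d β) :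
    ∃ c > 0, ∃ M > 0, ∀ S : Finset (Fin d → Bool), S.Nonempty → Sᶜ.Nonempty →
      ∀ G, Separated M ![S, Sᶜ] G → c ≤ W G := by
  have hsmall : ∀ᶠ c in 𝓝[>] (0 : ℝ),
      ∀ S : {S : Finset (Fin d → Bool) // S.Nonempty ∧ Sᶜ.Nonempty}, c < crossSum β ![S.1, S.1ᶜ] :=
    eventually_all.mpr fun S ↦ nhdsWithin_le_nhds <|
      eventually_lt_nhds (hCross 2 le_rfl _ (isCellPartition_pair_compl S.2.1 S.2.2))
  obtain ⟨c, hc, hc_pos⟩ := (hsmall.and self_mem_nhdsWithin).exists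
  have hlarge : ∀ᶠ M in atTop, ∀ S : {S : Finset (Fin d → Bool) // S.Nonempty ∧ Sᶜ.Nonempty},
      ∀ G, Separated M ![S.1, S.1ᶜ] G → c ≤ W G :=
    eventually_all.mpr fun S ↦ hDecomp.eventually_le_of_lt_crossSum le_rfl
      (isCellPartition_pair_compl S.2.1 S.2.2) (hc S)
  obtain ⟨M, hM, hM_pos⟩ := (hlarge.and (eventually_gt_atTop 0)).exists
  exact ⟨c, hc_pos, M, hM_pos, fun S hS hSc ↦ hM ⟨S, hS, hSc⟩⟩

theorem cell_energy_bounded_below_for_large_arguments_general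
    (hDecomp : PairDecomposition d A W β) (hCross : CrossPos d β) :
    ∃ c > (0 : ℝ), ∃ R > (0 : ℝ), ∀ G : CellMat d, PerpTrans G → R ≤ mnorm G → c ≤ W G := by
  obtain ⟨c, hc, M, hM, hW⟩ := hDecomp.exists_pos_forall_separated_pair_compl_le hCross
  refine ⟨c, hc, √(d * 2 ^ d) * ((2 ^ d + 1) * M) + 1, by positivity, fun G hG hR ↦ ?_⟩
  obtain ⟨S, hS, hSc, hsep⟩ := hG.exists_separated_pair_compl hM ((lt_add_one _).trans_le hR)
  exact hW S hS hSc G hsep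

end Energy

/-- Under Assumptions (i)–(iv), the cell energy is bounded away from zero
for large centered arguments. -/
theorem cell_energy_bounded_below_for_large_arguments
    (d : ℕ) (hd : 2 ≤ d) (A : Matrix (Fin d) (Fin d) ℝ) (hA : 0 < A.det)
    (W : CellMat d → ℝ) (hW0 : ∀ G, 0 ≤ W G)
    (hFrame : FrameIndiff d W) (hZero : MinimalOnSO d A W)
    (hSmooth : SmoothNearSO d A W) (hPos : HessPosDef d A W)
    (β : (Fin d → Bool) → (Fin d → Bool) → ℝ)
    (hβsym : ∀ s t, β s t = β t s) (hβnn : ∀ s t, 0 ≤ β s t)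
    (hDecomp : PairDecomposition d A W β) (hCross : CrossPos d β) :
    ∃ c > (0 : ℝ), ∃ R > (0 : ℝ), ∀ G : CellMat d, PerpTrans G → R ≤ mnorm G → c ≤ W G := by
  exact cell_energy_bounded_below_for_large_arguments_general hDecomp hCross

end Cleavage
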